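/- Let f : ℝ → ℝ be a Schwartz function. Then lim_{ℓ → 0⁺} ℓ^{−3} ∫_{ℝ} ∫_{ℝ} (f(x + y) − f(x))² / (cosh(y/ℓ) − 1) dx dy = (4π²/3) ∫_{ℝ} f′(x)² dx. -/

import Mathlib

open Real MeasureTheory Filter

open scoped Topology ENNReal

/-!
Put `G y = ∫ (f (x + y) - f x)² dx`. Since `(f (x + y) - f x) / y` is the average of `f'` over the
segment from `x` to `x + y`, Jensen's inequality and Tonelli's theorem give `G y / y² ≤ ∫ f'²`,
while Fatou's lemma and Lebesgue's differentiation theorem bound `∫ f'²` by the lower limit of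
`G y / y²` as `y → 0`; hence `G y / y² → ∫ f'²`. After the substitution `y = ℓ u`, dominated
convergence with dominating function `(∫ f'²) u² / (cosh u - 1)` reduces the claim to the value
`4π²/3` of `∫ u² / (cosh u - 1) du`, which is `4 Γ(3) ζ(2)` because
`1 / (cosh u - 1) = ∑ 2 n exp (-n u)` for `u > 0`.
-/

lemma hasSum_one_div_cosh_sub_one {u : ℝ} (hu : 0 < u) :
    HasSum (fun n : ℕ => 2 * (n : ℝ) * Real.exp (-n * u)) (1 / (Real.cosh u - 1)) := by
  have hnorm : ‖Real.exp (-u)‖ < 1 := by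
    rw [Real.norm_of_nonneg (Real.exp_pos _).le]
    exact Real.exp_lt_one_iff.2 (neg_lt_zero.2 hu)
  have hterm (n : ℕ) : 2 * (n : ℝ) * Real.exp (-n * u) = 2 * (n * Real.exp (-u) ^ n) := by
    rw [← Real.exp_nat_mul, neg_mul, mul_neg, mul_assoc]
  have hcosh : Real.cosh u - 1 = (1 - Real.exp (-u)) ^ 2 / (2 * Real.exp (-u)) := by
    have hexp : Real.exp u = (Real.exp (-u))⁻¹ := by rw [Real.exp_neg, inv_inv]
    rw [Real.cosh_eq, hexp]
    field_simp
    ring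
  simpa only [hterm, hcosh, one_div_div, mul_div_assoc] using
    (hasSum_coe_mul_geometric_of_norm_lt_one hnorm).mul_left 2

lemma mellin_one_div_cosh_sub_one {s : ℂ} (hs : 2 < s.re) :
    mellin (fun u => ((1 / (Real.cosh u - 1) : ℝ) : ℂ)) s
      = 2 * Complex.Gamma s * riemannZeta (s - 1) := by
  have hs₁ : 1 < (s - 1).re := by rw [Complex.sub_re, Complex.one_re]; linarith
  have hdiv (n : ℕ) : (n : ℂ) / (n : ℂ) ^ s = 1 / (n : ℂ) ^ (s - 1) := by
    rcases eq_or_ne n 0 with rfl | hn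
    · have : s - 1 ≠ 0 := fun h => by norm_num [h] at hs₁
      simp [this]
    · have hn' : (n : ℂ) ≠ 0 := Nat.cast_ne_zero.2 hn
      rw [Complex.cpow_sub _ _ hn', Complex.cpow_one, one_div_div]
  have hterm (n : ℕ) : Complex.Gamma s * (2 * n) / ((n : ℝ) : ℂ) ^ s
      = 2 * Complex.Gamma s * (1 / (n : ℂ) ^ (s - 1)) := by
    rw [← hdiv, Complex.ofReal_natCast]
    ring
  have hsummable : Summable fun n : ℕ => ‖(2 * n : ℂ)‖ / (n : ℝ) ^ s.re := by
    have hs₁' : 1 < s.re - 1 := by linarith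
    refine ((Real.summable_one_div_nat_rpow.2 hs₁').mul_left 2).congr fun n => ?_
    rcases eq_or_ne n 0 with rfl | hn
    · simp [(one_pos.trans hs₁').ne']
    · have hn' : (0 : ℝ) < n := by positivity
      rw [Real.rpow_sub_one hn'.ne', norm_mul, Complex.norm_ofNat, Complex.norm_natCast,
        one_div_div, mul_div_assoc]
  have hsum := hasSum_mellin (a := fun n : ℕ => 2 * (n : ℂ)) (p := fun n : ℕ => (n : ℝ))
    (fun n => n.eq_zero_or_pos.imp (by simp +contextual) Nat.cast_pos.2)
    (by linarith : 0 < s.re)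
    (fun u hu => by simpa only [Complex.ofReal_mul, Complex.ofReal_natCast, Complex.ofReal_ofNat]
      using Complex.hasSum_ofReal.2 (hasSum_one_div_cosh_sub_one hu))
    hsummable
  simp only [hterm] at hsum
  rw [← hsum.tsum_eq, tsum_mul_left, zeta_eq_tsum_one_div_nat_cpow hs₁]

lemma integral_sq_div_cosh_sub_one :
    ∫ u : ℝ, u ^ 2 / (Real.cosh u - 1) = 4 * π ^ 2 / 3 := by
  have hIoi : ∫ u in Set.Ioi (0 : ℝ), u ^ 2 / (Real.cosh u - 1) = 2 * π ^ 2 / 3 := by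
    have hmellin := mellin_one_div_cosh_sub_one (s := 3) (by norm_num)
    have hGamma : Complex.Gamma 3 = 2 := by simp
    have hexp : (3 : ℂ) - 1 = ((2 : ℕ) : ℂ) := by norm_num
    simp only [mellin, hGamma, hexp, Complex.cpow_natCast, smul_eq_mul] at hmellin
    rw [Nat.cast_ofNat, riemannZeta_two] at hmellin
    rw [← Complex.ofReal_inj, ← integral_complex_ofReal]
    push_cast at hmellin ⊢
    simp only [mul_one_div] at hmellin
    rw [hmellin]
    ring
  have habs := integral_comp_abs (f := fun u : ℝ => u ^ 2 / (Real.cosh u - 1))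
  simp only [sq_abs, Real.cosh_abs] at habs
  rw [habs, hIoi]
  ring

lemma integrable_sq_div_cosh_sub_one :
    Integrable (fun u : ℝ => u ^ 2 / (Real.cosh u - 1)) :=
  .of_integral_ne_zero (by rw [integral_sq_div_cosh_sub_one]; positivity)

lemma enorm_integral_rpow_le_lintegral {α E : Type*} [MeasurableSpace α] [NormedAddCommGroup E]
    [NormedSpace ℝ E] (μ : Measure α) [IsProbabilityMeasure μ] {p : ℝ} (hp : 1 ≤ p) (h : α → E) :
    ‖∫ a, h a ∂μ‖ₑ ^ p ≤ ∫⁻ a, ‖h a‖ₑ ^ p ∂μ := by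
  have hp₀ : 0 < p := one_pos.trans_le hp
  by_cases hh : AEStronglyMeasurable h μ
  · rw [← ENNReal.le_rpow_inv_iff hp₀]
    calc ‖∫ a, h a ∂μ‖ₑ ≤ eLpNorm' h 1 μ := by
          simpa [eLpNorm'] using enorm_integral_le_lintegral_enorm h
      _ ≤ eLpNorm' h p μ := eLpNorm'_le_eLpNorm'_of_exponent_le one_pos hp μ hh
      _ = (∫⁻ a, ‖h a‖ₑ ^ p ∂μ) ^ p⁻¹ := by rw [eLpNorm', one_div]
  · simp [integral_non_aestronglyMeasurable hh, hp₀]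

lemma integral_norm_rpow_eq_toReal_lintegral {α E : Type*} [MeasurableSpace α]
    [NormedAddCommGroup E] {μ : Measure α} {h : α → E} (hh : AEStronglyMeasurable h μ) {p : ℝ}
    (hp : 0 ≤ p) : ∫ a, ‖h a‖ ^ p ∂μ = (∫⁻ a, ‖h a‖ₑ ^ p ∂μ).toReal := by
  rw [integral_eq_lintegral_of_nonneg_ae (.of_forall fun a => by positivity)
    (hh.norm.aemeasurable.pow_const p).aestronglyMeasurable]
  simp only [← ENNReal.ofReal_rpow_of_nonneg (norm_nonneg _) hp, ofReal_norm]

lemma lintegral_enorm_rpow_lt_top {α E : Type*} [MeasurableSpace α] [NormedAddCommGroup E]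
    {μ : Measure α} {h : α → E} {p : ℝ} (hp : 0 < p) (hh : MemLp h (ENNReal.ofReal p) μ) :
    ∫⁻ a, ‖h a‖ₑ ^ p ∂μ < ∞ := by
  simpa only [ENNReal.toReal_ofReal hp.le] using lintegral_rpow_enorm_lt_top_of_eLpNorm_lt_top
    (ENNReal.ofReal_pos.2 hp).ne' ENNReal.ofReal_ne_top hh.eLpNorm_lt_top

lemma lintegral_lintegral_comp_add {G T : Type*} [AddGroup G] [MeasurableSpace G]
    [MeasurableAdd₂ G] [MeasurableSpace T] {μ : Measure G} [SFinite μ] [μ.IsAddRightInvariant]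
    {ν : Measure T} [SFinite ν] {τ : T → G} (hτ : Measurable τ) {φ : G → ℝ≥0∞}
    (hφ : AEMeasurable φ μ) :
    ∫⁻ x, ∫⁻ t, φ (x + τ t) ∂ν ∂μ = (∫⁻ x, φ x ∂μ) * ν Set.univ := by
  have hshear : MeasurePreserving (fun z : T × G => (z.1, z.2 + τ z.1)) (ν.prod μ) (ν.prod μ) :=
    (MeasurePreserving.id ν).skew_product (g := fun t x => x + τ t)
      (by fun_prop) (.of_forall fun t => map_add_right_eq_self μ (τ t))
  have hmeas : AEMeasurable (fun z : T × G => φ (z.2 + τ z.1)) (ν.prod μ) :=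
    hφ.comp_quasiMeasurePreserving
      (Measure.quasiMeasurePreserving_snd.comp hshear.quasiMeasurePreserving)
  calc ∫⁻ x, ∫⁻ t, φ (x + τ t) ∂ν ∂μ
      = ∫⁻ t, ∫⁻ x, φ (x + τ t) ∂μ ∂ν := (lintegral_lintegral_swap hmeas).symm
    _ = (∫⁻ x, φ x ∂μ) * ν Set.univ := by
        simp only [lintegral_add_right_eq_self φ, lintegral_const]

lemma intervalIntegrable_of_locallyIntegrable {E : Type*} [NormedAddCommGroup E] {μ : Measure ℝ}
    {g : ℝ → E} (hg : LocallyIntegrable g μ) (a b : ℝ) : IntervalIntegrable g μ a b :=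
  intervalIntegrable_iff.2 <|
    (hg.integrableOn_isCompact isCompact_uIcc).mono_set Set.uIoc_subset_uIcc

/-- `g` is the weak derivative of `f`: it is locally integrable and `f` is one of its indefinite
integrals. -/
structure HasWeakDeriv {E : Type*} [NormedAddCommGroup E] [NormedSpace ℝ E] (f g : ℝ → E) :
    Prop where
  locallyIntegrable : LocallyIntegrable g
  integral_eq_sub : ∀ a b, ∫ t in a..b, g t = f b - f a

namespace HasWeakDeriv

variable {E : Type*} [NormedAddCommGroup E] [NormedSpace ℝ E] {f g : ℝ → E} {p : ℝ}

lemma of_differentiable [CompleteSpace E] (hf : Differentiable ℝ f)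
    (hf' : LocallyIntegrable (deriv f)) : HasWeakDeriv f (deriv f) where
  locallyIntegrable := hf'
  integral_eq_sub a b := intervalIntegral.integral_deriv_eq_sub (fun x _ => hf x)
    (intervalIntegrable_of_locallyIntegrable hf' a b)

lemma eq_add_integral (hfg : HasWeakDeriv f g) : f = fun x => f 0 + ∫ t in 0..x, g t := by
  ext x
  rw [hfg.integral_eq_sub, add_sub_cancel]

lemma continuous (hfg : HasWeakDeriv f g) : Continuous f := by
  rw [hfg.eq_add_integral]
  exact continuous_const.add <| intervalIntegral.continuous_primitive
    (intervalIntegrable_of_locallyIntegrable hfg.locallyIntegrable) 0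

lemma ae_hasDerivAt [CompleteSpace E] (hfg : HasWeakDeriv f g) :
    ∀ᵐ x, HasDerivAt f (g x) x := by
  filter_upwards [LocallyIntegrable.ae_hasDerivAt_integral hfg.locallyIntegrable] with x hx
  rw [hfg.eq_add_integral]
  exact (hx 0).const_add (f 0)

lemma inv_smul_sub_eq_integral (hfg : HasWeakDeriv f g) {y : ℝ} (hy : y ≠ 0) (x : ℝ) :
    y⁻¹ • (f (x + y) - f x) = ∫ t in Set.Ioc (0 : ℝ) 1, g (x + y * t) := by
  rw [← intervalIntegral.integral_of_le zero_le_one, inv_smul_eq_iff₀ hy,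
    intervalIntegral.smul_integral_comp_add_mul, hfg.integral_eq_sub, mul_zero, mul_one, add_zero]

lemma lintegral_enorm_inv_smul_sub_rpow_le (hfg : HasWeakDeriv f g) (hp : 1 ≤ p) (y : ℝ) :
    ∫⁻ x, ‖y⁻¹ • (f (x + y) - f x)‖ₑ ^ p ≤ ∫⁻ x, ‖g x‖ₑ ^ p := by
  rcases eq_or_ne y 0 with rfl | hy
  · simp [one_pos.trans_le hp]
  have : IsProbabilityMeasure (volume.restrict (Set.Ioc (0 : ℝ) 1)) := ⟨by simp⟩
  calc ∫⁻ x, ‖y⁻¹ • (f (x + y) - f x)‖ₑ ^ p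
      ≤ ∫⁻ x, ∫⁻ t in Set.Ioc (0 : ℝ) 1, ‖g (x + y * t)‖ₑ ^ p := by
        refine lintegral_mono fun x => ?_
        rw [hfg.inv_smul_sub_eq_integral hy]
        exact enorm_integral_rpow_le_lintegral _ hp _
    _ = ∫⁻ x, ‖g x‖ₑ ^ p := by
        rw [lintegral_lintegral_comp_add (measurable_const_mul y)
          (hfg.locallyIntegrable.aestronglyMeasurable.enorm.pow_const p), measure_univ, mul_one]

lemma tendsto_lintegral_enorm_inv_smul_sub_rpow [CompleteSpace E] (hfg : HasWeakDeriv f g)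
    (hp : 1 ≤ p) :
    Tendsto (fun y => ∫⁻ x, ‖y⁻¹ • (f (x + y) - f x)‖ₑ ^ p) (𝓝[≠] 0)
      (𝓝 (∫⁻ x, ‖g x‖ₑ ^ p)) := by
  have hcont := hfg.continuous
  refine tendsto_of_le_liminf_of_limsup_le ?_
    (limsup_le_of_le (h := .of_forall (hfg.lintegral_enorm_inv_smul_sub_rpow_le hp)))
  have hlim : ∀ᵐ x, Tendsto (fun y => ‖y⁻¹ • (f (x + y) - f x)‖ₑ ^ p) (𝓝[≠] 0)
      (𝓝 (‖g x‖ₑ ^ p)) := by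
    filter_upwards [hfg.ae_hasDerivAt] with x hx
    exact (ENNReal.continuous_rpow_const.tendsto _).comp
      (hasDerivAt_iff_tendsto_slope_zero.1 hx).enorm
  calc ∫⁻ x, ‖g x‖ₑ ^ p
      = ∫⁻ x, liminf (fun y => ‖y⁻¹ • (f (x + y) - f x)‖ₑ ^ p) (𝓝[≠] 0) :=
        lintegral_congr_ae (hlim.mono fun x hx => hx.liminf_eq.symm)
    _ ≤ liminf (fun y => ∫⁻ x, ‖y⁻¹ • (f (x + y) - f x)‖ₑ ^ p) (𝓝[≠] 0) :=
        lintegral_liminf_le fun y =>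
          (Continuous.enorm (by fun_prop)).measurable.pow_const p

lemma integral_norm_inv_smul_sub_rpow_eq_toReal (hfg : HasWeakDeriv f g) (hp : 0 ≤ p) (y : ℝ) :
    ∫ x, ‖y⁻¹ • (f (x + y) - f x)‖ ^ p
      = (∫⁻ x, ‖y⁻¹ • (f (x + y) - f x)‖ₑ ^ p).toReal := by
  have hcont := hfg.continuous
  exact integral_norm_rpow_eq_toReal_lintegral
    (Continuous.aestronglyMeasurable (by fun_prop)) hp

lemma integral_norm_inv_smul_sub_rpow_le (hfg : HasWeakDeriv f g) (hp : 1 ≤ p)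
    (hg : MemLp g (ENNReal.ofReal p)) (y : ℝ) :
    ∫ x, ‖y⁻¹ • (f (x + y) - f x)‖ ^ p ≤ ∫ x, ‖g x‖ ^ p := by
  have hp₀ : 0 < p := one_pos.trans_le hp
  rw [hfg.integral_norm_inv_smul_sub_rpow_eq_toReal hp₀.le,
    integral_norm_rpow_eq_toReal_lintegral hg.1 hp₀.le]
  exact ENNReal.toReal_mono (lintegral_enorm_rpow_lt_top hp₀ hg).ne
    (hfg.lintegral_enorm_inv_smul_sub_rpow_le hp y)

lemma tendsto_integral_norm_inv_smul_sub_rpow [CompleteSpace E] (hfg : HasWeakDeriv f g)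
    (hp : 1 ≤ p) (hg : MemLp g (ENNReal.ofReal p)) :
    Tendsto (fun y => ∫ x, ‖y⁻¹ • (f (x + y) - f x)‖ ^ p) (𝓝[≠] 0) (𝓝 (∫ x, ‖g x‖ ^ p)) := by
  have hp₀ : 0 < p := one_pos.trans_le hp
  simp only [hfg.integral_norm_inv_smul_sub_rpow_eq_toReal hp₀.le,
    integral_norm_rpow_eq_toReal_lintegral hg.1 hp₀.le]
  exact (ENNReal.tendsto_toReal (lintegral_enorm_rpow_lt_top hp₀ hg).ne).comp
    (hfg.tendsto_lintegral_enorm_inv_smul_sub_rpow hp)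

lemma stronglyMeasurable_integral_norm_inv_smul_sub_rpow (hfg : HasWeakDeriv f g) (p : ℝ) :
    StronglyMeasurable fun y => ∫ x, ‖y⁻¹ • (f (x + y) - f x)‖ ^ p := by
  have hcont := hfg.continuous
  have hdiff : Measurable fun z : ℝ × ℝ => ‖f (z.2 + z.1) - f z.2‖ :=
    Continuous.measurable (by fun_prop)
  refine StronglyMeasurable.integral_prod_right
    (f := fun y x => ‖y⁻¹ • (f (x + y) - f x)‖ ^ p) (Measurable.stronglyMeasurable ?_)
  simp only [Function.uncurry_def, norm_smul]
  fun_prop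

end HasWeakDeriv

lemma tendsto_integral_smul_comp_smul {V E : Type*} [NormedAddCommGroup V] [NormedSpace ℝ V]
    [MeasurableSpace V] [BorelSpace V] {μ : Measure V} [NullSingletonClass μ] [NormedAddCommGroup E]
    [NormedSpace ℝ E] [CompleteSpace E] {φ : V → ℝ} {H : V → E} {C : ℝ} {L : E}
    (hφ : Integrable φ μ) (hH : StronglyMeasurable H) (hC : ∀ v, ‖H v‖ ≤ C)
    (hL : Tendsto H (𝓝[≠] 0) (𝓝 L)) :
    Tendsto (fun ℓ : ℝ => ∫ v, φ v • H (ℓ • v) ∂μ) (𝓝[≠] 0) (𝓝 ((∫ v, φ v ∂μ) • L)) := by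
  rw [← integral_smul_const]
  refine tendsto_integral_filter_of_dominated_convergence (fun v => ‖φ v‖ * C)
    (.of_forall fun ℓ => hφ.1.smul
      (hH.comp_measurable (measurable_const_smul ℓ)).aestronglyMeasurable)
    (.of_forall fun ℓ => .of_forall fun v => ?_) (hφ.norm.mul_const C) ?_
  · rw [norm_smul]
    gcongr
    exact hC _
  · filter_upwards [Measure.ae_ne μ 0] with v hv
    have hscale : Tendsto (fun ℓ : ℝ => ℓ • v) (𝓝[≠] 0) (𝓝[≠] 0) := by
      refine tendsto_nhdsWithin_iff.2 ⟨?_, ?_⟩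
      · have hcont : Continuous fun ℓ : ℝ => ℓ • v := by fun_prop
        exact (hcont.tendsto' 0 0 (zero_smul ℝ v)).mono_left nhdsWithin_le_nhds
      · filter_upwards [self_mem_nhdsWithin] with ℓ hℓ
        exact smul_ne_zero hℓ hv
    exact (hL.comp hscale).const_smul (φ v)

lemma zpow_mul_integral_integral_norm_sub_sq_div {E : Type*} [NormedAddCommGroup E]
    [NormedSpace ℝ E] (f : ℝ → E) (k : ℝ → ℝ) {ℓ : ℝ} (hℓ : 0 < ℓ) :
    ℓ ^ (-3 : ℤ) * ∫ y, ∫ x, ‖f (x + y) - f x‖ ^ 2 / k (y / ℓ)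
      = ∫ u, u ^ 2 / k u * ∫ x, ‖(ℓ * u)⁻¹ • (f (x + ℓ * u) - f x)‖ ^ 2 := by
  have hsq (y x : ℝ) :
      ‖f (x + y) - f x‖ ^ 2 = y ^ 2 * ‖y⁻¹ • (f (x + y) - f x)‖ ^ 2 := by
    rcases eq_or_ne y 0 with rfl | hy
    · simp
    · rw [norm_smul, mul_pow, norm_inv, inv_pow, Real.norm_eq_abs, sq_abs,
        mul_inv_cancel_left₀ (pow_ne_zero 2 hy)]
  have hsubst := Measure.integral_comp_mul_left
    (fun y => ∫ x, ‖f (x + y) - f x‖ ^ 2 / k (y / ℓ)) ℓ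
  simp only [mul_div_cancel_left₀ _ hℓ.ne', abs_of_pos (inv_pos.2 hℓ), smul_eq_mul] at hsubst
  calc ℓ ^ (-3 : ℤ) * ∫ y, ∫ x, ‖f (x + y) - f x‖ ^ 2 / k (y / ℓ)
      = ℓ ^ (-2 : ℤ) * ∫ u, ∫ x, ‖f (x + ℓ * u) - f x‖ ^ 2 / k u := by
        rw [hsubst, ← mul_assoc, ← zpow_sub_one₀ hℓ.ne']
        norm_num
    _ = ∫ u, u ^ 2 / k u * ∫ x, ‖(ℓ * u)⁻¹ • (f (x + ℓ * u) - f x)‖ ^ 2 := by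
        rw [← integral_const_mul]
        congr with u
        simp only [hsq (ℓ * u), integral_div, integral_const_mul]
        rw [zpow_neg, zpow_ofNat]
        field_simp

theorem strip_jump_form_cosh_sub_one_limit_general {E : Type*} [NormedAddCommGroup E]
    [NormedSpace ℝ E] [CompleteSpace E] {f g : ℝ → E} (hfg : HasWeakDeriv f g)
    (hg : MemLp g 2) :
    Tendsto
      (fun ℓ : ℝ =>
        ℓ ^ (-3 : ℤ) * ∫ y : ℝ, ∫ x : ℝ, ‖f (x + y) - f x‖ ^ 2 / (Real.cosh (y / ℓ) - 1))
      (𝓝[>] 0) (𝓝 ((4 * π ^ 2 / 3) * ∫ x : ℝ, ‖g x‖ ^ 2)) := by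
  have hg' : MemLp g (ENNReal.ofReal 2) := by rwa [ENNReal.ofReal_ofNat]
  have hmeas := hfg.stronglyMeasurable_integral_norm_inv_smul_sub_rpow 2
  have hle := hfg.integral_norm_inv_smul_sub_rpow_le one_le_two hg'
  have hlim := hfg.tendsto_integral_norm_inv_smul_sub_rpow one_le_two hg'
  simp only [Real.rpow_two] at hmeas hle hlim
  have hscaled := tendsto_integral_smul_comp_smul integrable_sq_div_cosh_sub_one hmeas
    (fun y => (Real.norm_of_nonneg (integral_nonneg fun x => by positivity)).trans_le (hle y)) hlim
  rw [integral_sq_div_cosh_sub_one] at hscaled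
  refine (hscaled.mono_left (nhdsGT_le_nhdsNE 0)).congr' ?_
  filter_upwards [self_mem_nhdsWithin] with ℓ hℓ
  exact (zpow_mul_integral_integral_norm_sub_sq_div f (fun u => Real.cosh u - 1) hℓ).symm

theorem strip_jump_form_cosh_sub_one_limit (f : SchwartzMap ℝ ℝ) :
    Filter.Tendsto
      (fun ℓ : ℝ =>
        ℓ ^ (-3 : ℤ) * ∫ y : ℝ, ∫ x : ℝ, (f (x + y) - f x) ^ 2 / (Real.cosh (y / ℓ) - 1))
      (nhdsWithin 0 (Set.Ioi 0))
      (nhds ((4 * π ^ 2 / 3) * ∫ x : ℝ, (deriv (⇑f) x) ^ 2)) := by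
  have hf' : MemLp (deriv f) 2 := by
    simpa only [funext (SchwartzMap.derivCLM_apply ℝ f)] using
      (SchwartzMap.derivCLM ℝ ℝ f).memLp 2 volume
  simpa only [Real.norm_eq_abs, sq_abs] using strip_jump_form_cosh_sub_one_limit_general
    (.of_differentiable f.differentiable (hf'.locallyIntegrable one_le_two)) hf'
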